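/- arXiv:1409.6413 — 4 statements merged into one kernel-verified Lean document; each statement's English description precedes it below -/
import Mathlib

section
/- The function f₁(x) = ln Γ(x+1) − (1/2)ln(2π) − (2/3)(x+1/2)ln(x+1/2) − (1/6)(x+1/2)ln x − (1/6)(x+1/2)ln(x+1) + (x+1/2) is completely monotonic on (0,∞), i.e., (−1)^n f₁^(n)(x) ≥ 0 for all x > 0 and all n ≥ 0. -/
open Real

namespace F1CM
open Filter Topology Set

noncomputable def psi : ℝ → ℝ := deriv (Real.log ∘ Real.Gamma)

noncomputable def T (m : ℕ) (x : ℝ) : ℝ := ∑' k : ℕ, 1 / (x + k) ^ m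

lemma logGamma_diff {x : ℝ} (hx : 0 < x) : DifferentiableAt ℝ (Real.log ∘ Real.Gamma) x := by
  refine ((differentiableAt_Gamma ?_).log (Gamma_ne_zero ?_)) <;>
  exact fun m ↦ ne_of_gt (by have : (0:ℝ) ≤ m := m.cast_nonneg
                             linarith)

lemma psi_add_one {x : ℝ} (hx : 0 < x) : psi (x + 1) = psi x + 1 / x := by
  unfold psi
  rw [← deriv_comp_add_const, one_div, ← Real.deriv_log,
      ← deriv_add (logGamma_diff hx) (differentiableAt_log hx.ne')]
  apply EventuallyEq.deriv_eq
  filter_upwards [eventually_gt_nhds hx] with x hx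
  simp only [Function.comp_apply, Pi.add_apply,
      Gamma_add_one hx.ne', log_mul hx.ne' (Gamma_pos_of_pos hx).ne', add_comm]

lemma psi_mono : MonotoneOn psi (Ioi 0) :=
  convexOn_log_Gamma.monotoneOn_deriv (fun _ hx => logGamma_diff hx)

lemma psi_add_nat {x : ℝ} (hx : 0 < x) (N : ℕ) :
    psi (x + N) = psi x + ∑ k ∈ Finset.range N, 1 / (x + k) := by
  induction N with
  | zero => simp
  | succ n ih =>
    rw [Finset.sum_range_succ, ← add_assoc, ← ih, ← psi_add_one (by positivity)]
    push_cast
    ring_nf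

lemma tendsto_psi {y z : ℝ} (hy : 0 < y) (h1 : y ≤ z) (h2 : z ≤ y + 1) :
    Tendsto (fun N : ℕ => ∑ k ∈ Finset.range N, (1 / (y + k) - 1 / (z + k))) atTop
      (𝓝 (psi z - psi y)) := by
  have hz : 0 < z := by linarith
  have key : Tendsto (fun N : ℕ => psi (z + N) - psi (y + N)) atTop (𝓝 0) := by
    have hl : Tendsto (fun N : ℕ => 1 / (y + (N : ℝ))) atTop (𝓝 0) := by
      simp_rw [one_div]
      exact tendsto_inv_atTop_zero.comp (tendsto_atTop_add_const_left _ _ tendsto_natCast_atTop_atTop)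
    refine tendsto_of_tendsto_of_tendsto_of_le_of_le tendsto_const_nhds hl ?_ ?_
    · intro N
      have := psi_mono (show (y + N) ∈ Ioi (0:ℝ) from by simp only [mem_Ioi]; positivity)
        (show (z + N) ∈ Ioi (0:ℝ) from by simp only [mem_Ioi]; positivity) (by linarith)
      simpa using this
    · intro N
      have := psi_mono (show (z + N) ∈ Ioi (0:ℝ) from by simp only [mem_Ioi]; positivity)
        (show (y + N + 1) ∈ Ioi (0:ℝ) from by simp only [mem_Ioi]; positivity) (by linarith)
      rw [psi_add_one (by positivity)] at this
      simp only
      linarith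
  have := key.const_sub (psi z - psi y)
  rw [sub_zero] at this
  refine this.congr fun N => ?_
  rw [psi_add_nat hy, psi_add_nat hz, Finset.sum_sub_distrib]
  ring

lemma summable_T {x : ℝ} (hx : 0 < x) {m : ℕ} (hm : 2 ≤ m) :
    Summable fun k : ℕ => 1 / (x + k) ^ m := by
  have := (Real.summable_one_div_nat_add_rpow x m).2 (by exact_mod_cast hm)
  refine this.congr fun k => ?_
  rw [abs_of_pos (by positivity), rpow_natCast, add_comm]

lemma hasDerivAt_pow_inv (c : ℝ) (m : ℕ) {x : ℝ} (hx : 0 < x + c) :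
    HasDerivAt (fun x : ℝ => 1 / (x + c) ^ m) (-(m * (1 / (x + c) ^ (m + 1)))) x := by
  have h : HasDerivAt (fun x : ℝ => ((x + c) ^ m)⁻¹) _ x :=
    (((hasDerivAt_id x).add_const c).pow m).inv (pow_ne_zero m hx.ne')
  simp_rw [one_div]
  refine h.congr_deriv ?_
  change -(m * (x + c) ^ (m - 1) * 1) / ((x + c) ^ m) ^ 2 = _
  cases m with
  | zero => simp
  | succ n =>
    rw [Nat.add_sub_cancel]
    field_simp
    ring

lemma hasDerivAt_T {x : ℝ} (hx : 0 < x) {m : ℕ} (hm : 2 ≤ m) :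
    HasDerivAt (T m) (-(m * T (m + 1) x)) x := by
  have := hasDerivAt_tsum_of_isPreconnected (t := Ioi (x / 2)) (y₀ := x) (y := x)
    (g := fun (k : ℕ) (x : ℝ) => 1 / (x + k) ^ m)
    (g' := fun (k : ℕ) (x : ℝ) => -(m * (1 / (x + k) ^ (m + 1))))
    (u := fun k : ℕ => m * (1 / (x / 2 + k) ^ (m + 1)))
    ((summable_T (x := x / 2) (by positivity) (by omega)).mul_left _) isOpen_Ioi isPreconnected_Ioi
    (fun k y hy => hasDerivAt_pow_inv _ _ (by
      have : x / 2 < y := hy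
      have : (0 : ℝ) ≤ k := k.cast_nonneg
      linarith))
    (fun k y hy => by
      have h : x / 2 < y := hy
      have : 0 < y := by linarith
      rw [norm_neg, Real.norm_of_nonneg (by positivity)]
      gcongr)
    (by simp [hx]) (summable_T hx hm) (by simp [hx])
  rw [tsum_neg, tsum_mul_left] at this
  exact this

lemma hasDerivAt_psi {x : ℝ} (hx : 0 < x) : HasDerivAt psi (T 2 x) x := by
  set y := x - min x 1 / 2 with hydef
  have hm0 : 0 < min x 1 := lt_min hx one_pos
  have hm1 : min x 1 ≤ 1 := min_le_right _ _
  have hmx : min x 1 ≤ x := min_le_left _ _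
  have hy : 0 < y := by linarith
  have hyx : y < x := by linarith
  have hxy : x < y + 1 := by linarith
  have hu : Summable (fun k : ℕ => 1 / (y / 2 + k) ^ 2) :=
    summable_T (x := y / 2) (by positivity) le_rfl
  have hd : ∀ (k : ℕ), ∀ z ∈ Ioi (y / 2),
      HasDerivAt (fun z : ℝ => 1 / (y + k) - 1 / (z + k)) (1 / (z + k) ^ 2) z := by
    intro k z hz
    have hz : y / 2 < z := hz
    have hk : (0 : ℝ) ≤ k := k.cast_nonneg
    have := (hasDerivAt_pow_inv k 1 (x := z) (by linarith)).const_sub (1 / (y + k))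
    simpa using this
  have hb : ∀ (k : ℕ), ∀ z ∈ Ioi (y / 2), ‖1 / (z + k) ^ 2‖ ≤ 1 / (y / 2 + k) ^ 2 := by
    intro k z hz
    have h : y / 2 < z := hz
    have : 0 < z := by linarith
    rw [Real.norm_of_nonneg (by positivity)]
    gcongr
  have hs0 : Summable fun k : ℕ => 1 / (y + k) - 1 / (y + k) := by simp
  have hyt : y ∈ Ioi (y / 2) := by simp [hy]
  have hxt : x ∈ Ioi (y / 2) := by simp only [mem_Ioi]; linarith
  have h1 := hasDerivAt_tsum_of_isPreconnected hu isOpen_Ioi isPreconnected_Ioi hd hb hyt hs0 hxt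
  have h2 := h1.add_const (psi y)
  refine h2.congr_of_eventuallyEq ?_
  filter_upwards [Ioo_mem_nhds hyx hxy] with z hz
  have hzs := summable_of_summable_hasDerivAt_of_isPreconnected hu isOpen_Ioi isPreconnected_Ioi
    hd hb hyt hs0 (show z ∈ Ioi (y / 2) from by simp only [mem_Ioi]; linarith [hz.1])
  have := tendsto_nhds_unique hzs.hasSum.tendsto_sum_nat (tendsto_psi hy hz.1.le hz.2.le)
  rw [this]; ring

lemma T_shift {x : ℝ} (hx : 0 < x) {m : ℕ} (hm : 2 ≤ m) : T m x = 1 / x ^ m + T m (x + 1) := by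
  unfold T
  rw [(summable_T hx hm).tsum_eq_zero_add]
  congr 1
  · simp
  · refine tsum_congr fun k => ?_
    push_cast
    ring_nf

lemma T_nonneg {x : ℝ} (hx : 0 < x) (m : ℕ) : 0 ≤ T m x :=
  tsum_nonneg fun k => by positivity

lemma iter {G : ℕ → ℝ → ℝ} (h : ∀ n x, 0 < x → HasDerivAt (G n) (G (n + 1) x) x) (n : ℕ) :
    ∀ x, 0 < x → iteratedDeriv n (G 0) x = G n x := by
  induction n with
  | zero => simp
  | succ n ih =>
    intro x hx
    rw [iteratedDeriv_succ, ← (h n x hx).deriv]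
    apply EventuallyEq.deriv_eq
    filter_upwards [eventually_gt_nhds hx] using ih

lemma phi_nonneg {u : ℝ} (hu : 0 ≤ u) :
    0 ≤ 5 * u + u * cosh (2 * u) - sinh (2 * u) - 4 * sinh u := by
  have mono : ∀ (f f' : ℝ → ℝ), (∀ x, HasDerivAt f (f' x) x) → (∀ x, 0 ≤ x → 0 ≤ f' x) → f 0 = 0 →
      ∀ x, 0 ≤ x → 0 ≤ f x := by
    intro f f' hf hf' h0 x hx
    have := monotoneOn_of_deriv_nonneg (convex_Ici 0)
      (f := f) (fun x _ => (hf x).continuousAt.continuousWithinAt)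
      (fun x _ => (hf x).differentiableAt.differentiableWithinAt)
      (fun x hx => by
        rw [(hf x).deriv]; rw [interior_Ici] at hx; exact hf' x (le_of_lt hx))
    have := this (mem_Ici.2 le_rfl) (mem_Ici.2 hx) hx
    rwa [h0] at this
  have h2 : ∀ x : ℝ, HasDerivAt (fun x : ℝ => 2 * x) 2 x := fun x => by
    simpa using (hasDerivAt_id x).const_mul 2
  have hs := fun x => (h2 x).sinh
  have hc := fun x => (h2 x).cosh
  have s1 : ∀ x, 0 ≤ x → 0 ≤ x * cosh x - sinh x := by
    refine mono _ (fun x => x * sinh x) (fun x => ?_) (fun x hx => ?_) (by simp)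
    · refine HasDerivAt.congr_deriv
        (((hasDerivAt_id x).mul (hasDerivAt_cosh x)).sub (hasDerivAt_sinh x)) ?_
      simp
    · exact mul_nonneg hx (sinh_nonneg_iff.2 hx)
  have s2 : ∀ x, 0 ≤ x → 0 ≤ 5 - cosh (2 * x) + 2 * x * sinh (2 * x) - 4 * cosh x := by
    refine mono _ (fun x => 4 * (x * cosh (2 * x) - sinh x)) (fun x => ?_) (fun x hx => ?_)
      (by norm_num)
    · refine HasDerivAt.congr_deriv ((((hc x).const_sub 5).add ((h2 x).mul (hs x))).sub
        ((hasDerivAt_cosh x).const_mul 4)) ?_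
      ring
    · have h1 : cosh x ≤ cosh (2 * x) := by
        rw [cosh_le_cosh, abs_of_nonneg hx, abs_of_nonneg (by positivity)]; linarith
      nlinarith [s1 x hx, mul_le_mul_of_nonneg_left h1 hx]
  refine mono (fun u => 5 * u + u * cosh (2 * u) - sinh (2 * u) - 4 * sinh u) _ (fun x => ?_) s2
    (by simp) u hu
  refine HasDerivAt.congr_deriv (((((hasDerivAt_id x).const_mul 5).add ((hasDerivAt_id x).mul (hc x))).sub (hs x)).sub
        ((hasDerivAt_sinh x).const_mul 4)) ?_
  simp
  ring

open MeasureTheory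

lemma int_J (m : ℕ) {b : ℝ} (hb : 0 < b) :
    IntegrableOn (fun t : ℝ => t ^ m * exp (-(b * t))) (Ioi 0) := by
  have := integrableOn_rpow_mul_exp_neg_mul_rpow (p := 1) (s := m) (b := b)
    (by have : (0:ℝ) ≤ m := m.cast_nonneg
        linarith) one_pos hb
  simpa using this

lemma val_J (m : ℕ) {b : ℝ} (hb : 0 < b) :
    ∫ t in Ioi (0:ℝ), t ^ m * exp (-(b * t)) = m.factorial * (1 / b ^ (m + 1)) := by
  have := Real.integral_rpow_mul_exp_neg_mul_Ioi (a := m + 1) (r := b) (by positivity) hb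
  rw [Gamma_nat_eq_factorial] at this
  simp only [add_sub_cancel_right, rpow_natCast] at this
  rw [this]
  rw [show ((m : ℝ) + 1) = ((m + 1 : ℕ) : ℝ) by push_cast; ring, rpow_natCast]
  rw [one_div_pow]; ring

lemma K_nonneg (m : ℕ) {x : ℝ} (hx : 0 < x) :
    0 ≤ ((m + 1).factorial : ℝ) * (5 / 6 * (1 / (x + 1) ^ (m + 2)) + 1 / 12 * (1 / x ^ (m + 2))
        + 1 / 12 * (1 / (x + 2) ^ (m + 2)))
      + (m.factorial : ℝ) * (1 / 6 * (1 / (x + 2) ^ (m + 1)) - 1 / 6 * (1 / x ^ (m + 1))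
        - 2 / 3 * (1 / (x + 1 / 2) ^ (m + 1)) + 2 / 3 * (1 / (x + 3 / 2) ^ (m + 1))) := by
  have i1 := (int_J (m + 1) (b := x + 1) (by positivity)).const_mul (5 / 6)
  have i2 := (int_J (m + 1) (b := x) (by positivity)).const_mul (1 / 12)
  have i3 := (int_J (m + 1) (b := x + 2) (by positivity)).const_mul (1 / 12)
  have i4 := (int_J m (b := x + 2) (by positivity)).const_mul (1 / 6)
  have i5 := (int_J m (b := x) (by positivity)).const_mul (1 / 6)
  have i6 := (int_J m (b := x + 1 / 2) (by positivity)).const_mul (2 / 3)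
  have i7 := (int_J m (b := x + 3 / 2) (by positivity)).const_mul (2 / 3)
  have v1 := val_J (m + 1) (b := x + 1) (by positivity)
  have v2 := val_J (m + 1) (b := x) (by positivity)
  have v3 := val_J (m + 1) (b := x + 2) (by positivity)
  have v4 := val_J m (b := x + 2) (by positivity)
  have v5 := val_J m (b := x) (by positivity)
  have v6 := val_J m (b := x + 1 / 2) (by positivity)
  have v7 := val_J m (b := x + 3 / 2) (by positivity)
  have e := integral_add ((i1.add i2).add i3) (((i4.sub i5).sub i6).add i7)
  have e1 := integral_add (i1.add i2) i3
  have e2 := integral_add i1 i2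
  have e3 := integral_add ((i4.sub i5).sub i6) i7
  have e4 := integral_sub (i4.sub i5) i6
  have e5 := integral_sub i4 i5
  simp only [Pi.add_apply, Pi.sub_apply] at e e1 e2 e3 e4 e5
  rw [e1, e2, e3, e4, e5] at e
  simp only [integral_const_mul, v1, v2, v3, v4, v5, v6, v7] at e
  refine le_of_le_of_eq ?_ (e.trans (by ring))
  refine setIntegral_nonneg measurableSet_Ioi fun t ht => ?_
  have ht : 0 < t := ht
  have hp := phi_nonneg (u := t / 2) (by positivity)
  have hp2 : 0 ≤ t ^ m * exp (-((x + 1) * t)) * ((1 / 3) * 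
    (5 * (t / 2) + t / 2 * cosh (2 * (t / 2)) - sinh (2 * (t / 2)) - 4 * sinh (t / 2))) := by
    positivity
  refine le_of_le_of_eq hp2 ?_
  rw [show 2 * (t / 2) = t by ring, cosh_eq, sinh_eq, sinh_eq]
  rw [show -(x * t) = -((x + 1) * t) + t by ring,
    show -((x + 2) * t) = -((x + 1) * t) + -t by ring,
    show -((x + 1 / 2) * t) = -((x + 1) * t) + t / 2 by ring,
    show -((x + 3 / 2) * t) = -((x + 1) * t) + -(t / 2) by ring]
  simp only [Real.exp_add _ t, Real.exp_add _ (-t), Real.exp_add _ (t / 2),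
    Real.exp_add _ (-(t / 2))]
  ring

noncomputable def e (m : ℕ) (x : ℝ) : ℝ :=
  (m.factorial : ℝ) * (2 / 3 * (1 / (x + 1 / 2) ^ (m + 1)) + 1 / 6 * (1 / (x + 0) ^ (m + 1))
    + 1 / 6 * (1 / (x + 1) ^ (m + 1)))
  + ((m + 1).factorial : ℝ) * (1 / 12 * (1 / (x + 1) ^ (m + 2)) - 1 / 12 * (1 / (x + 0) ^ (m + 2)))

noncomputable def H (m : ℕ) (x : ℝ) : ℝ := ((m + 1).factorial : ℝ) * T (m + 2) (x + 1) - e m x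

lemma hasDerivAt_e (m : ℕ) {x : ℝ} (hx : 0 < x) : HasDerivAt (e m) (-(e (m + 1) x)) x := by
  have d1 := (hasDerivAt_pow_inv (1 / 2) (m + 1) (x := x) (by positivity)).const_mul (2 / 3)
  have d2 := (hasDerivAt_pow_inv 0 (m + 1) (x := x) (by positivity)).const_mul (1 / 6)
  have d3 := (hasDerivAt_pow_inv 1 (m + 1) (x := x) (by positivity)).const_mul (1 / 6)
  have d4 := (hasDerivAt_pow_inv 1 (m + 2) (x := x) (by positivity)).const_mul (1 / 12)
  have d5 := (hasDerivAt_pow_inv 0 (m + 2) (x := x) (by positivity)).const_mul (1 / 12)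
  refine HasDerivAt.congr_deriv ((((d1.add d2).add d3).const_mul (m.factorial : ℝ)).add
    ((d4.sub d5).const_mul ((m + 1).factorial : ℝ))) ?_
  unfold e
  rw [Nat.factorial_succ (m + 1), Nat.factorial_succ m]
  push_cast
  ring

lemma hasDerivAt_H (m : ℕ) {x : ℝ} (hx : 0 < x) : HasDerivAt (H m) (-(H (m + 1) x)) x := by
  have d1 := ((hasDerivAt_T (x := x + 1) (by positivity) (m := m + 2) (by omega)).comp_add_const
    x 1).const_mul ((m + 1).factorial : ℝ)
  refine HasDerivAt.congr_deriv (d1.sub (hasDerivAt_e m hx)) ?_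
  unfold H
  rw [Nat.factorial_succ (m + 1)]
  push_cast
  ring

lemma tendsto_inv_pow (x c : ℝ) (m : ℕ) :
    Tendsto (fun k : ℕ => 1 / (x + k + c) ^ (m + 1)) atTop (𝓝 0) := by
  simp_rw [one_div]
  refine tendsto_inv_atTop_zero.comp ((tendsto_pow_atTop (by omega)).comp ?_)
  exact tendsto_atTop_add_const_right _ _
    (tendsto_atTop_add_const_left _ _ tendsto_natCast_atTop_atTop)

lemma tendsto_e (m : ℕ) (x : ℝ) : Tendsto (fun k : ℕ => e m (x + k)) atTop (𝓝 0) := by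
  have := (((((tendsto_inv_pow x (1 / 2) m).const_mul (2 / 3)).add
    ((tendsto_inv_pow x 0 m).const_mul (1 / 6))).add
    ((tendsto_inv_pow x 1 m).const_mul (1 / 6))).const_mul (m.factorial : ℝ)).add
    ((((tendsto_inv_pow x 1 (m + 1)).const_mul (1 / 12)).sub
    ((tendsto_inv_pow x 0 (m + 1)).const_mul (1 / 12))).const_mul ((m + 1).factorial : ℝ))
  simpa [e] using this

lemma H_step (m : ℕ) {x : ℝ} (hx : 0 < x) : H m (x + 1) ≤ H m x := by
  have := K_nonneg m hx
  rw [← sub_nonneg]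
  refine le_of_le_of_eq this ?_
  unfold H
  rw [T_shift (x := x + 1) (by positivity) (by omega)]
  unfold e
  rw [show x + 1 + 1 = x + 2 by ring, show x + 1 + 1 / 2 = x + 3 / 2 by ring, add_zero, add_zero]
  ring

lemma H_step_nat (m : ℕ) {x : ℝ} (hx : 0 < x) (k : ℕ) : H m (x + k) ≤ H m x := by
  induction k with
  | zero => simp
  | succ k ih =>
    refine le_trans ?_ ih
    push_cast
    rw [← add_assoc]
    exact H_step m (by positivity)

lemma H_nonneg (m : ℕ) {x : ℝ} (hx : 0 < x) : 0 ≤ H m x := by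
  have h := (tendsto_e m x).neg
  rw [neg_zero] at h
  refine le_of_tendsto' h fun k => le_trans ?_ (H_step_nat m hx k)
  unfold H
  have := T_nonneg (x := x + k + 1) (by positivity) (m + 2)
  have : 0 ≤ ((m + 1).factorial : ℝ) * T (m + 2) (x + k + 1) := by positivity
  linarith

noncomputable def f (x : ℝ) : ℝ := Real.log (Real.Gamma (x + 1)) - (1 / 2) * Real.log (2 * π)
          - (2 / 3) * (x + 1 / 2) * Real.log (x + 1 / 2)
          - (1 / 6) * (x + 1 / 2) * Real.log x
          - (1 / 6) * (x + 1 / 2) * Real.log (x + 1) + (x + 1 / 2)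

noncomputable def f1 (x : ℝ) : ℝ := psi (x + 1)
          - (2 / 3) * (Real.log (x + 1 / 2) + 1)
          - (1 / 6) * (Real.log x + 1 + 1 / 2 * (1 / (x + 0) ^ 1))
          - (1 / 6) * (Real.log (x + 1) + 1 - 1 / 2 * (1 / (x + 1) ^ 1)) + 1

lemma hd_log (c : ℝ) {x : ℝ} (hx : 0 < x + c) :
    HasDerivAt (fun x : ℝ => Real.log (x + c)) (1 / (x + c)) x := by
  simpa using ((hasDerivAt_id x).add_const c).log hx.ne'

lemma hasDerivAt_f {x : ℝ} (hx : 0 < x) : HasDerivAt f (f1 x) x := by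
  have d1 : HasDerivAt (fun x => Real.log (Real.Gamma (x + 1))) (psi (x + 1)) x :=
    (logGamma_diff (x := x + 1) (by positivity)).hasDerivAt.comp_add_const x 1
  have dy : HasDerivAt (fun x : ℝ => x + 1 / 2) 1 x := (hasDerivAt_id x).add_const _
  have l1 := hd_log (1 / 2) (x := x) (by positivity)
  have l2 := Real.hasDerivAt_log hx.ne'
  have l3 := hd_log 1 (x := x) (by positivity)
  refine HasDerivAt.congr_deriv (((((d1.sub_const _).sub ((dy.const_mul (2 / 3)).mul l1)).sub
    ((dy.const_mul (1 / 6)).mul l2)).sub ((dy.const_mul (1 / 6)).mul l3)).add dy) ?_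
  unfold f1
  have : x + 1 / 2 ≠ 0 := by positivity
  rw [add_zero]
  field_simp
  ring

lemma hasDerivAt_f1 {x : ℝ} (hx : 0 < x) : HasDerivAt f1 (H 0 x) x := by
  have d1 := (hasDerivAt_psi (x := x + 1) (by positivity)).comp_add_const x 1
  have l1 := hd_log (1 / 2) (x := x) (by positivity)
  have l2 := Real.hasDerivAt_log hx.ne'
  have l3 := hd_log 1 (x := x) (by positivity)
  have p1 := hasDerivAt_pow_inv 0 1 (x := x) (by positivity)
  have p2 := hasDerivAt_pow_inv 1 1 (x := x) (by positivity)
  refine HasDerivAt.congr_deriv ((((d1.sub ((l1.add_const 1).const_mul (2 / 3))).sub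
    (((l2.add_const 1).add (p1.const_mul (1 / 2))).const_mul (1 / 6))).sub
    (((l3.add_const 1).sub (p2.const_mul (1 / 2))).const_mul (1 / 6))).add_const 1) ?_
  unfold H e
  simp
  ring

lemma tendsto_f : Tendsto (fun n : ℕ => f n) atTop (𝓝 0) := by
  have hS := (Stirling.tendsto_stirlingSeq_sqrt_pi.log (by positivity)).sub_const (Real.log (√π))
  have hN : Tendsto (fun n : ℕ => (n : ℝ)) atTop atTop := tendsto_natCast_atTop_atTop
  have a1 := (Real.tendsto_mul_log_one_add_div_atTop (1 / 2)).comp hN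
  have a2 := (Real.tendsto_mul_log_one_add_div_atTop 1).comp hN
  have hinv : Tendsto (fun n : ℕ => 1 + (1 / 2) * ((n : ℝ))⁻¹) atTop (𝓝 (1 + (1 / 2) * 0)) :=
    ((tendsto_inv_atTop_zero.comp hN).const_mul (1 / 2)).const_add 1
  have hA := (hS.add_const (1 / 2)).sub
    (hinv.mul ((a1.const_mul (2 / 3)).add (a2.const_mul (1 / 6))))
  have h0 : Real.log (√π) - Real.log (√π) + 1 / 2
      - (1 + (1 / 2) * 0) * (2 / 3 * (1 / 2) + 1 / 6 * 1) = (0 : ℝ) := by ring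
  rw [h0] at hA
  refine hA.congr' ?_
  filter_upwards [eventually_gt_atTop 0] with n hn
  have hn : (0 : ℝ) < n := by exact_mod_cast hn
  simp only [Function.comp_apply]
  rw [show 1 + 1 / 2 / (n : ℝ) = (n + 1 / 2) / n by field_simp,
    show 1 + 1 / (n : ℝ) = (n + 1) / n by field_simp,
    Real.log_div (by positivity) hn.ne', Real.log_div (by positivity) hn.ne']
  unfold f Stirling.stirlingSeq
  rw [Real.Gamma_nat_eq_factorial, Real.log_div (by positivity) (by positivity),
    Real.log_mul (by positivity) (by positivity), Real.log_pow,
    Real.log_div (by positivity) (by positivity), Real.log_exp, Real.log_sqrt (by positivity),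
    Real.log_sqrt (by positivity), Real.log_mul (by positivity) (by positivity),
    Real.log_mul (by positivity) (by positivity)]
  field_simp
  ring

lemma f1_nonpos {x : ℝ} (hx : 0 < x) : f1 x ≤ 0 := by
  by_contra! hc
  have hmono : MonotoneOn f1 (Ioi 0) := monotoneOn_of_deriv_nonneg (convex_Ioi 0)
    (fun x hx => (hasDerivAt_f1 hx).continuousAt.continuousWithinAt)
    (fun x hx => (hasDerivAt_f1 (by simpa using hx)).differentiableAt.differentiableWithinAt)
    (fun x hx => by
      have hx : 0 < x := by simpa using hx
      rw [(hasDerivAt_f1 hx).deriv]; exact H_nonneg 0 hx)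
  have hlin : MonotoneOn (fun y => f y - f1 x * y) (Ici x) := by
    have hd : ∀ y, x ≤ y → HasDerivAt (fun y => f y - f1 x * y) (f1 y - f1 x) y := by
      intro y hy
      refine HasDerivAt.congr_deriv ((hasDerivAt_f (lt_of_lt_of_le hx hy)).sub
        ((hasDerivAt_id y).const_mul (f1 x))) ?_
      simp
    refine monotoneOn_of_deriv_nonneg (convex_Ici x)
      (fun y hy => (hd y hy).continuousAt.continuousWithinAt)
      (fun y hy => (hd y (interior_subset hy)).differentiableAt.differentiableWithinAt)
      (fun y hy => ?_)
    have hy : x ≤ y := interior_subset hy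
    rw [(hd y hy).deriv]
    have := hmono (mem_Ioi.2 hx) (mem_Ioi.2 (lt_of_lt_of_le hx hy)) hy
    linarith
  have hT : Tendsto (fun n : ℕ => f x - f1 x * x + f1 x * (n : ℝ)) atTop atTop :=
    tendsto_atTop_add_const_left _ _ (tendsto_natCast_atTop_atTop.const_mul_atTop hc)
  have hT2 : Tendsto (fun n : ℕ => f n) atTop atTop := by
    refine tendsto_atTop_mono' _ ?_ hT
    filter_upwards [eventually_ge_atTop ⌈x⌉₊] with n hn
    have hn : x ≤ n := (Nat.le_ceil x).trans (by exact_mod_cast hn)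
    have := hlin (mem_Ici.2 le_rfl) (mem_Ici.2 hn) hn
    simp only at this
    linarith
  exact not_tendsto_nhds_of_tendsto_atTop hT2 _ tendsto_f

lemma f_nonneg {x : ℝ} (hx : 0 < x) : 0 ≤ f x := by
  have hanti : AntitoneOn f (Ioi 0) := antitoneOn_of_deriv_nonpos (convex_Ioi 0)
    (fun x hx => (hasDerivAt_f hx).continuousAt.continuousWithinAt)
    (fun x hx => (hasDerivAt_f (by simpa using hx)).differentiableAt.differentiableWithinAt)
    (fun x hx => by
      have hx : 0 < x := by simpa using hx
      rw [(hasDerivAt_f hx).deriv]; exact f1_nonpos hx)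
  refine le_of_tendsto tendsto_f ?_
  filter_upwards [eventually_ge_atTop ⌈x⌉₊] with n hn
  have hn : x ≤ n := (Nat.le_ceil x).trans (by exact_mod_cast hn)
  exact hanti (mem_Ioi.2 hx) (mem_Ioi.2 (lt_of_lt_of_le hx hn)) hn

noncomputable def G : ℕ → ℝ → ℝ
  | 0 => f
  | 1 => f1
  | (m + 2) => fun x => (-1) ^ m * H m x

lemma hasDerivAt_G (n : ℕ) (x : ℝ) (hx : 0 < x) : HasDerivAt (G n) (G (n + 1) x) x := by
  match n with
  | 0 => exact hasDerivAt_f hx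
  | 1 => simpa [G] using hasDerivAt_f1 hx
  | (m + 2) =>
    refine HasDerivAt.congr_deriv ((hasDerivAt_H m hx).const_mul ((-1) ^ m)) ?_
    simp only [G]
    ring

end F1CM

theorem f1_completely_monotone :
    ∀ n : ℕ, ∀ x : ℝ, 0 < x →
      0 ≤ (-1 : ℝ) ^ n * iteratedDeriv n
        (fun x : ℝ => Real.log (Real.Gamma (x + 1)) - (1 / 2) * Real.log (2 * π)
          - (2 / 3) * (x + 1 / 2) * Real.log (x + 1 / 2)
          - (1 / 6) * (x + 1 / 2) * Real.log x
          - (1 / 6) * (x + 1 / 2) * Real.log (x + 1) + (x + 1 / 2)) x := by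
  intro n x hx
  have h : iteratedDeriv n (fun x : ℝ => Real.log (Real.Gamma (x + 1)) - (1 / 2) * Real.log (2 * π)
          - (2 / 3) * (x + 1 / 2) * Real.log (x + 1 / 2)
          - (1 / 6) * (x + 1 / 2) * Real.log x
          - (1 / 6) * (x + 1 / 2) * Real.log (x + 1) + (x + 1 / 2)) x = F1CM.G n x :=
    F1CM.iter F1CM.hasDerivAt_G n x hx
  rw [h]
  match n with
  | 0 => simpa [F1CM.G] using F1CM.f_nonneg hx
  | 1 => simpa [F1CM.G] using F1CM.f1_nonpos hx
  | (m + 2) =>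
    simp only [F1CM.G]
    rw [← mul_assoc, ← pow_add, show m + 2 + m = 2 * (m + 1) by ring, pow_mul]
    simpa using F1CM.H_nonneg m hx
end

section
/- The function f₂(x) = ln Γ(x+1) − (1/2)ln(2π) − (x+1/2)·((x+1)ln(x+1) − x·ln x − 1) + x + 1/2 is completely monotonic on (0,∞). -/
open Real

/-- Completely monotonic functions on the positive half-line (with smoothness). -/
def CMon (f : ℝ → ℝ) : Prop :=
  (∀ x : ℝ, 0 < x → ContDiffAt ℝ (⊤ : ℕ∞) f x) ∧
    ∀ n : ℕ, ∀ x : ℝ, 0 < x → 0 ≤ (-1 : ℝ) ^ n * iteratedDeriv n f x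

lemma CMon.add {f g : ℝ → ℝ} (hf : CMon f) (hg : CMon g) : CMon (fun x => f x + g x) := by
  refine ⟨fun x hx => (hf.1 x hx).add (hg.1 x hx), fun n x hx => ?_⟩
  rw [iteratedDeriv_fun_add ((hf.1 x hx).of_le (by exact_mod_cast le_top))
    ((hg.1 x hx).of_le (by exact_mod_cast le_top)), mul_add]
  exact add_nonneg (hf.2 n x hx) (hg.2 n x hx)

lemma CMon.const_mul {f : ℝ → ℝ} (hf : CMon f) {c : ℝ} (hc : 0 ≤ c) :
    CMon (fun x => c * f x) := by
  refine ⟨fun x hx => contDiffAt_const.mul (hf.1 x hx), fun n x hx => ?_⟩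
  rw [iteratedDeriv_const_mul_field, mul_left_comm]
  exact mul_nonneg hc (hf.2 n x hx)

lemma CMon.zero : CMon (fun _ => 0) := by
  refine ⟨fun x hx => contDiffAt_const, fun n x hx => ?_⟩
  simp

lemma CMon.sum {F : ℕ → ℝ → ℝ} (hF : ∀ k, CMon (F k)) (n : ℕ) :
    CMon (fun x => ∑ k ∈ Finset.range n, F k x) := by
  induction n with
  | zero => simpa using CMon.zero
  | succ n ih =>
    simp only [Finset.sum_range_succ]
    exact ih.add (hF n)

lemma CMon.shift {f : ℝ → ℝ} (hf : CMon f) {s : ℝ} (hs : 0 ≤ s) : CMon (fun x => f (x + s)) := by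
  refine ⟨fun x hx => ?_, fun n x hx => ?_⟩
  · exact (hf.1 (x + s) (by linarith)).comp x (contDiffAt_id.add contDiffAt_const)
  · rw [iteratedDeriv_comp_add_const]
    exact hf.2 n (x + s) (by linarith)

lemma CMon.zpow (m : ℕ) : CMon (fun x => x ^ (-(m : ℤ))) := by
  refine ⟨fun x hx => ?_, fun n x hx => ?_⟩
  · simp only [zpow_neg, zpow_natCast]
    exact (contDiffAt_id.pow m).inv (by simp [hx.ne'])
  · rw [iteratedDeriv_eq_iterate, iter_deriv_zpow, ← mul_assoc]
    have : (-1 : ℝ) ^ n * ∏ i ∈ Finset.range n, (((-(m : ℤ) : ℤ) : ℝ) - i)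
        = ∏ i ∈ Finset.range n, ((m : ℝ) + i) := by
      have h1 : (-1 : ℝ) ^ n = ∏ i ∈ Finset.range n, (-1 : ℝ) := by simp
      rw [h1, ← Finset.prod_mul_distrib]
      refine Finset.prod_congr rfl fun i _ => ?_
      push_cast; ring
    rw [this]
    positivity

lemma contDiffAt_deriv_top {f : ℝ → ℝ} {x : ℝ} (hf : ContDiffAt ℝ (⊤ : ℕ∞) f x) :
    ContDiffAt ℝ (⊤ : ℕ∞) (deriv f) x := by
  have h : ContDiffAt ℝ (⊤ : ℕ∞) (fun y => fderiv ℝ f y 1) x :=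
    (hf.fderiv_right (m := (⊤ : ℕ∞)) (by simp)).clm_apply contDiffAt_const
  exact h

lemma CMon.neg_deriv {f : ℝ → ℝ} (hf : CMon f) : CMon (fun x => - deriv f x) := by
  refine ⟨fun x hx => ?_, fun n x hx => ?_⟩
  · exact (contDiffAt_deriv_top (hf.1 x hx)).neg
  · have := hf.2 (n + 1) x hx
    rw [iteratedDeriv_succ', pow_succ] at this
    rw [iteratedDeriv_fun_neg]
    linarith

lemma CMon.convexOn {f : ℝ → ℝ} (hf : CMon f) : ConvexOn ℝ (Set.Ioi 0) f := by
  refine convexOn_of_deriv2_nonneg' (convex_Ioi 0) ?_ ?_ ?_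
  · intro x hx
    exact ((hf.1 x hx).differentiableAt (by simp)).differentiableWithinAt
  · intro x hx
    have := ((hf.neg_deriv.1 x hx).differentiableAt (by simp)).neg
    simp only [Pi.neg_def, neg_neg] at this
    exact this.differentiableWithinAt
  · intro x hx
    have := hf.2 2 x hx
    rw [iteratedDeriv_eq_iterate] at this
    simpa using this

open Filter Topology in
lemma CMon.limit_aux (n : ℕ) : ∀ (h : ℕ → ℝ → ℝ) (f : ℝ → ℝ), (∀ N, CMon (h N)) →
    (∀ x : ℝ, 0 < x → ContDiffAt ℝ (⊤ : ℕ∞) f x) →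
    (∀ x : ℝ, 0 < x → Tendsto (fun N => h N x) atTop (𝓝 (f x))) →
    ∀ x : ℝ, 0 < x → 0 ≤ (-1 : ℝ) ^ n * iteratedDeriv n f x := by
  induction n with
  | zero =>
    intro h f hh hf hl x hx
    simp only [pow_zero, iteratedDeriv_zero, one_mul]
    refine ge_of_tendsto' (hl x hx) fun N => ?_
    simpa using (hh N).2 0 x hx
  | succ n ih =>
    intro h f hh hf hl x hx
    have key := ih (fun N x => - deriv (h N) x) (fun x => - deriv f x)
      (fun N => (hh N).neg_deriv)
      (fun x hx => (contDiffAt_deriv_top (hf x hx)).neg) ?_ x hx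
    · rw [iteratedDeriv_fun_neg] at key
      rw [iteratedDeriv_succ', pow_succ]
      linarith
    · intro x hx
      refine Tendsto.neg ?_
      have hd : HasDerivAt f (deriv f x) x := ((hf x hx).differentiableAt (by simp)).hasDerivAt
      have hs := hasDerivAt_iff_tendsto_slope.1 hd
      have hsl : ∀ y : ℝ, 0 < y → ∀ z : ℝ, 0 < z →
          Tendsto (fun N => slope (h N) y z) atTop (𝓝 (slope f y z)) := by
        intro y hy z hz
        simp only [slope_def_field]
        exact ((hl z hz).sub (hl y hy)).div_const _
      refine tendsto_order.2 ⟨fun a ha => ?_, fun a ha => ?_⟩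
      · have h1 : ∀ᶠ y in 𝓝[<] x, a < slope f x y :=
          (hs.mono_left (nhdsWithin_mono _ (fun y hy => ne_of_lt hy))).eventually_const_lt ha
        have h2 : ∀ᶠ y in 𝓝[<] x, 0 < y :=
          nhdsWithin_le_nhds (eventually_gt_nhds hx)
        obtain ⟨y, ⟨hy1, hy2⟩, hy3⟩ := ((h1.and h2).and self_mem_nhdsWithin).exists
        rw [slope_comm] at hy1
        filter_upwards [(hsl y hy2 x hx).eventually_const_lt hy1] with N hN
        exact hN.trans_le ((hh N).convexOn.slope_le_deriv hy2 hx hy3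
          (((hh N).1 x hx).differentiableAt (by simp)))
      · have h1 : ∀ᶠ y in 𝓝[>] x, slope f x y < a :=
          (hs.mono_left (nhdsWithin_mono _ (fun y hy => ne_of_gt hy))).eventually_lt_const ha
        obtain ⟨y, hy1, hy3⟩ := (h1.and self_mem_nhdsWithin).exists
        have hy2 : 0 < y := hx.trans hy3
        filter_upwards [(hsl x hx y hy2).eventually_lt_const hy1] with N hN
        exact ((hh N).convexOn.deriv_le_slope hx hy2 hy3
          (((hh N).1 x hx).differentiableAt (by simp))).trans_lt hN

open Filter Topology in
lemma CMon.limit {h : ℕ → ℝ → ℝ} {f : ℝ → ℝ} (hh : ∀ N, CMon (h N))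
    (hf : ∀ x : ℝ, 0 < x → ContDiffAt ℝ (⊤ : ℕ∞) f x)
    (hl : ∀ x : ℝ, 0 < x → Tendsto (fun N => h N x) atTop (𝓝 (f x))) : CMon f :=
  ⟨hf, fun n => CMon.limit_aux n h f hh hf hl⟩

/-- The function of the statement. -/
noncomputable def f2 : ℝ → ℝ := fun x : ℝ =>
  Real.log (Real.Gamma (x + 1)) - (1 / 2) * Real.log (2 * π)
          - (x + 1 / 2) * ((x + 1) * Real.log (x + 1) - x * Real.log x - 1)
          + x + 1 / 2

lemma contDiffAt_Gamma_real {x : ℝ} (hx : 0 < x) : ContDiffAt ℝ (⊤ : ℕ∞) Real.Gamma x := by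
  have h : ContDiffAt ℂ (⊤ : ℕ∞) Complex.Gamma (x : ℂ) := by
    have hd : DifferentiableOn ℂ Complex.Gamma {z : ℂ | 0 < z.re} := by
      intro z hz
      refine (Complex.differentiableAt_Gamma z fun m hm => ?_).differentiableWithinAt
      have : z.re ≤ 0 := by rw [hm]; simp
      exact absurd hz (not_lt.2 this)
    have ho : IsOpen {z : ℂ | 0 < z.re} := isOpen_lt continuous_const Complex.continuous_re
    exact (hd.analyticAt (ho.mem_nhds (by simpa using hx))).contDiffAt
  exact h.real_of_complex

lemma f2_contDiffAt {x : ℝ} (hx : 0 < x) : ContDiffAt ℝ (⊤ : ℕ∞) f2 x := by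
  have hG : ContDiffAt ℝ (⊤ : ℕ∞) (fun x : ℝ => Real.Gamma (x + 1)) x :=
    ContDiffAt.comp (g := Real.Gamma) (f := fun x : ℝ => x + 1) x
      (contDiffAt_Gamma_real (by linarith)) (contDiffAt_id.add contDiffAt_const)
  have h1 := hG.log (Real.Gamma_pos_of_pos (by linarith)).ne'
  have h2 : ContDiffAt ℝ (⊤ : ℕ∞) (fun x : ℝ => x) x := contDiffAt_id
  have h3 : ContDiffAt ℝ (⊤ : ℕ∞) (fun x : ℝ => x + 1) x := h2.add contDiffAt_const
  have h4 := h2.log hx.ne'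
  have h5 := h3.log (by positivity)
  exact (((h1.sub contDiffAt_const).sub ((h2.add contDiffAt_const).mul
    (((h3.mul h5).sub (h2.mul h4)).sub contDiffAt_const))).add h2).add contDiffAt_const

lemma f2_hasSum {x : ℝ} (hx : 0 < x) :
    HasSum (fun n : ℕ => (n : ℝ) / (2 * (n + 1) * (n + 2) * (2 * n + 3)) *
      (x + 1) ^ (-((2 * n + 2 : ℕ) : ℤ))) (f2 x - f2 (x + 1)) := by
  obtain ⟨y, rfl⟩ : ∃ y, x = y - 1 := ⟨x + 1, by ring⟩
  have hy : 1 < y := by linarith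
  have hy0 : 0 < y := by linarith
  set u := y⁻¹ with hu
  have hu0 : 0 < u := by positivity
  have hu1 : u < 1 := inv_lt_one_of_one_lt₀ hy
  have hyu : y * u = 1 := mul_inv_cancel₀ hy0.ne'
  have A := hasSum_pow_div_log_of_abs_lt_one (x := u ^ 2)
    (by rw [abs_of_nonneg (by positivity)]; nlinarith)
  have B := hasSum_log_sub_log_of_abs_lt_one (x := u) (by rw [abs_of_pos hu0]; exact hu1)
  have A2 := (hasSum_nat_add_iff' 1).2 (A.mul_left (y ^ 2))
  have B2 := (hasSum_nat_add_iff' 1).2 (B.mul_left (3 / 2 * y))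
  have C := (B2.sub A2).sub (A.mul_left (1 / 2))
  have e1 : log (1 + u) = log (y + 1) - log y := by
    rw [← Real.log_div (by positivity) hy0.ne']; congr 1; field_simp; linarith
  have e2 : log (1 - u) = log (y - 1) - log y := by
    rw [← Real.log_div hx.ne' hy0.ne']; congr 1; field_simp; linarith
  have e3 : log (1 - u ^ 2) = log (1 + u) + log (1 - u) := by
    rw [← Real.log_mul (by positivity) (by linarith)]; congr 1; ring
  have e4 : log (Gamma (y + 1)) = log y + log (Gamma y) := by
    rw [Gamma_add_one hy0.ne', log_mul hy0.ne' (Gamma_pos_of_pos hy0).ne']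
  convert! C using 1
  · funext n
    have z1 : (y - 1 + 1) ^ (-((2 * n + 2 : ℕ) : ℤ)) = u ^ (2 * n + 2) := by
      rw [sub_add_cancel, zpow_neg, zpow_natCast, hu, inv_pow]
    rw [z1]
    have z2 : y ^ 2 * ((u ^ 2) ^ (n + 1 + 1) / (((n + 1 : ℕ) : ℝ) + 1))
        = u ^ (2 * n + 2) / (n + 2) := by
      have : y ^ 2 * (u ^ 2) ^ (n + 1 + 1) = (y * u) ^ 2 * u ^ (2 * n + 2) := by ring
      rw [← mul_div_assoc, this, hyu]; push_cast; ring
    have z3 : 3 / 2 * y * (2 * (1 / (2 * ((n + 1 : ℕ) : ℝ) + 1)) * u ^ (2 * (n + 1) + 1))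
        = 3 * u ^ (2 * n + 2) / (2 * n + 3) := by
      have : u ^ (2 * (n + 1) + 1) = u * u ^ (2 * n + 2) := by ring
      rw [this]
      push_cast
      calc _ = (y * u) * (3 * u ^ (2 * n + 2) / (2 * (n + 1) + 1)) := by ring
        _ = _ := by rw [hyu]; ring
    rw [z2, z3]
    have : (u ^ 2) ^ (n + 1) = u ^ (2 * n + 2) := by ring
    rw [this]
    field_simp
    ring
  · simp only [Finset.sum_range_one, f2]
    rw [e3, e1, e2]
    have w1 : y ^ 2 * ((u ^ 2) ^ (0 + 1) / (((0 : ℕ) : ℝ) + 1)) = 1 := by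
      have : y ^ 2 * (u ^ 2) = (y * u) ^ 2 := by ring
      simp [this, hyu]
    have w2 : 3 / 2 * y * (2 * (1 / (2 * ((0 : ℕ) : ℝ) + 1)) * u ^ (2 * 0 + 1)) = 3 := by
      simp; linarith
    rw [w1, w2]
    simp only [sub_add_cancel]
    rw [e4]
    ring

open Filter Topology in
lemma E_tendsto : Tendsto (fun y : ℝ => (y + 1 / 2) * ((y + 1) * log (1 + 1 / y) - 1)) atTop
    (𝓝 (1 / 2)) := by
  have hup : Tendsto (fun y : ℝ => 1 / 2 + 1 / 4 * y⁻¹) atTop (𝓝 (1 / 2)) := by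
    have h := (tendsto_inv_atTop_zero.const_mul (1 / 4 : ℝ)).const_add (1 / 2 : ℝ)
    rwa [mul_zero, add_zero] at h
  refine tendsto_of_tendsto_of_tendsto_of_le_of_le' tendsto_const_nhds hup ?_ ?_
  · filter_upwards [eventually_gt_atTop 0] with y hy
    have h := Real.le_log_one_add_of_nonneg (x := 1 / y) (by positivity)
    have h2 : 2 * (1 / y) / (1 / y + 2) = 2 / (2 * y + 1) := by field_simp; ring
    rw [h2] at h
    have h3 : (y + 1 / 2) * ((y + 1) * (2 / (2 * y + 1)) - 1) = 1 / 2 := by field_simp; ring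
    refine h3.symm.le.trans ?_
    have h4 := mul_le_mul_of_nonneg_left h (by linarith : 0 ≤ y + 1)
    exact mul_le_mul_of_nonneg_left (by linarith) (by linarith)
  · filter_upwards [eventually_gt_atTop 0] with y hy
    have hp : 0 < 1 + 1 / y := by positivity
    have h : log (1 + 1 / y) ≤ (1 + 1 / y - (1 + 1 / y)⁻¹) / 2 := by
      rw [← Real.sinh_log hp, Real.self_le_sinh_iff]
      exact Real.log_nonneg (by have : 0 < 1 / y := by positivity
                                linarith)
    have h3 : (y + 1 / 2) * ((y + 1) * ((1 + 1 / y - (1 + 1 / y)⁻¹) / 2) - 1)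
        = 1 / 2 + 1 / 4 * y⁻¹ := by field_simp; ring
    rw [← h3]
    gcongr

lemma logGamma_add (x : ℝ) (hx : 0 < x) (N : ℕ) :
    log (Gamma (x + N)) = log (Gamma x) + ∑ m ∈ Finset.range N, log (x + m) := by
  induction N with
  | zero => simp
  | succ N ih =>
    have h : 0 < x + N := by positivity
    rw [Finset.sum_range_succ, ← add_assoc, ← ih, Nat.cast_succ, ← add_assoc,
      Gamma_add_one h.ne', log_mul h.ne' (Gamma_pos_of_pos h).ne']
    ring

open Filter Topology in
lemma f2_tendsto {x : ℝ} (hx : 0 < x) : Tendsto (fun N : ℕ => f2 (x + N)) atTop (𝓝 0) := by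
  have hy : Tendsto (fun N : ℕ => x + (N : ℝ)) atTop atTop :=
    tendsto_atTop_add_const_left _ _ tendsto_natCast_atTop_atTop
  have hE := E_tendsto.comp hy
  have hD := (BohrMollerup.tendsto_log_gamma hx).const_sub (log (Gamma x))
  have hS := ((Real.continuousAt_log (by positivity : √π ≠ 0)).tendsto.comp
    Stirling.tendsto_stirlingSeq_sqrt_pi)
  have hL : Tendsto (fun N : ℕ => (N : ℝ) * log (1 + x / N)) atTop (𝓝 x) :=
    (Real.tendsto_mul_log_one_add_div_atTop x).comp tendsto_natCast_atTop_atTop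
  have hL0 : Tendsto (fun N : ℕ => log (1 + x / N)) atTop (𝓝 0) := by
    have h1 : Tendsto (fun N : ℕ => 1 + x / (N : ℝ)) atTop (𝓝 1) := by
      simpa using (tendsto_const_div_atTop_nhds_zero_nat x).const_add 1
    have h2 := (Real.continuousAt_log one_ne_zero).tendsto.comp h1
    rw [log_one] at h2
    exact h2
  have T := (((hD.add hS).sub hL).sub (hL0.const_mul (x + 1 / 2))).sub hE
  have T2 := T.add_const (x + 1 / 2 - log √π)
  have e : log (Gamma x) - log (Gamma x) + log √π - x - (x + 1 / 2) * 0 - 1 / 2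
      + (x + 1 / 2 - log √π) = 0 := by ring
  rw [e] at T2
  refine T2.congr' ?_
  filter_upwards [eventually_gt_atTop 0] with N hN
  have hN' : (0 : ℝ) < N := by exact_mod_cast hN
  have hyp : 0 < x + N := by positivity
  simp only [Function.comp, f2, Stirling.log_stirlingSeq_formula, BohrMollerup.logGammaSeq]
  have a1 : log (Gamma (x + N + 1)) = log (Gamma x) + ∑ m ∈ Finset.range (N + 1), log (x + m) := by
    rw [← logGamma_add x hx]; push_cast; rw [add_assoc]
  have a2 : log (1 + x / N) = log (x + N) - log N := by
    rw [← log_div hyp.ne' hN'.ne']; congr 1; field_simp; ring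
  have a3 : log (1 + 1 / (x + N)) = log (x + N + 1) - log (x + N) := by
    rw [← log_div (by positivity) hyp.ne']; congr 1; field_simp
  have a4 : log √π = log π / 2 := log_sqrt pi_pos.le
  have a5 : log (2 * π) = log 2 + log π := log_mul two_ne_zero pi_pos.ne'
  have a6 : log (2 * N) = log 2 + log N := log_mul two_ne_zero hN'.ne'
  have a7 : log (N / exp 1) = log N - 1 := by rw [log_div hN'.ne' (exp_pos 1).ne', log_exp]
  rw [a1, a2, a3, a4, a5, a6, a7]
  ring

open Filter Topology in
lemma f2_cmon : CMon f2 := by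
  have hg : CMon (fun x => f2 x - f2 (x + 1)) := by
    refine CMon.limit (h := fun N x => ∑ n ∈ Finset.range N,
      (n : ℝ) / (2 * (n + 1) * (n + 2) * (2 * n + 3)) * (x + 1) ^ (-((2 * n + 2 : ℕ) : ℤ)))
      (fun N => CMon.sum (fun n => ?_) N) ?_ ?_
    · exact ((CMon.zpow (2 * n + 2)).shift zero_le_one).const_mul (by positivity)
    · intro x hx
      exact (f2_contDiffAt hx).sub (ContDiffAt.comp (g := f2) (f := fun x : ℝ => x + 1) x
        (f2_contDiffAt (by linarith)) (contDiffAt_id.add contDiffAt_const))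
    · intro x hx
      exact (f2_hasSum hx).tendsto_sum_nat
  refine CMon.limit (h := fun N x => ∑ k ∈ Finset.range N, (f2 (x + k) - f2 (x + k + 1)))
    (fun N => CMon.sum (fun k => hg.shift (Nat.cast_nonneg k)) N) (fun x hx => f2_contDiffAt hx) ?_
  intro x hx
  have : ∀ N : ℕ, ∑ k ∈ Finset.range N, (f2 (x + k) - f2 (x + k + 1)) = f2 x - f2 (x + N) := by
    intro N
    have := Finset.sum_range_sub' (fun k : ℕ => f2 (x + k)) N
    simpa [add_assoc] using this
  simp only [this]
  simpa using (f2_tendsto hx).const_sub (f2 x)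

theorem f2_completely_monotone :
    ∀ n : ℕ, ∀ x : ℝ, 0 < x →
      0 ≤ (-1 : ℝ) ^ n * iteratedDeriv n
        (fun x : ℝ => Real.log (Real.Gamma (x + 1)) - (1 / 2) * Real.log (2 * π)
          - (x + 1 / 2) * ((x + 1) * Real.log (x + 1) - x * Real.log x - 1)
          + x + 1 / 2) x := by
  exact f2_cmon.2
end

section
/- For every x > 0, √(2π)·e^{−2x−1}·(x+1)^{(x+1)(x+1/2)}/x^{x(x+1/2)} < Γ(x+1) < e^{−2x}·(x+1)^{(x+1)(x+1/2)}/x^{x(x+1/2)}. -/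
open Real Filter Topology Set

theorem phi1_neg (u : ℝ) (h0 : 0 < u) (h1 : u < 1) :
    3/2 * (log (1+u) - log (1-u)) - u/(1-u^2) - 2*u < 0 := by
  have key : ∀ v ∈ Ico (0:ℝ) 1, HasDerivAt (fun u : ℝ => 3/2 * (log (1+u) - log (1-u)) - u/(1-u^2) - 2*u)
      (-2*v^4/(1-v^2)^2) v := by
    intro v hv
    have a1 : (1 + v) ≠ 0 := by linarith [hv.1]
    have a2 : (1 - v) ≠ 0 := by linarith [hv.2]
    have a3 : (1 - v^2) ≠ 0 := by nlinarith [hv.1, hv.2]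
    have e1 := ((hasDerivAt_id v).const_add 1).log a1
    have e2 := ((hasDerivAt_id v).const_sub 1).log a2
    have e3 := (hasDerivAt_id v).div (((hasDerivAt_id v).pow 2).const_sub 1) a3
    have e4 := (hasDerivAt_id v).const_mul 2
    have := (((e1.sub e2).const_mul (3/2)).sub e3).sub e4
    refine this.congr_deriv ?_
    simp only [id, Pi.pow_apply]
    have a4 : 1 - v^2 = (1-v)*(1+v) := by ring
    simp only [a4]
    push_cast
    field_simp
    ring
  have anti := strictAntiOn_of_deriv_neg (convex_Ico (0:ℝ) 1)
    (fun v hv => (key v hv).continuousAt.continuousWithinAt) (by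
      intro v hv
      rw [interior_Ico] at hv
      rw [(key v ⟨hv.1.le, hv.2⟩).deriv]
      have : 0 < v := hv.1
      have a3 : 0 < (1 - v^2) := by nlinarith [hv.1, hv.2]
      have : 0 < 2*v^4/(1-v^2)^2 := by positivity
      have e : -2*v^4/(1-v^2)^2 = -(2*v^4/(1-v^2)^2) := by ring
      linarith)
  have := anti ⟨le_rfl, one_pos⟩ ⟨h0.le, h1⟩ h0
  simpa using this

theorem phi_neg (u : ℝ) (h0 : 0 < u) (h1 : u < 1) :
    2 * (log (1+u) + log (1-u)) + 3/2 * (u * (log (1+u) - log (1-u))) - u^2 < 0 := by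
  have key : ∀ v ∈ Ico (0:ℝ) 1, HasDerivAt (fun u : ℝ => 2 * (log (1+u) + log (1-u)) + 3/2 * (u * (log (1+u) - log (1-u))) - u^2)
      (3/2 * (log (1+v) - log (1-v)) - v/(1-v^2) - 2*v) v := by
    intro v hv
    have a1 : (1 + v) ≠ 0 := by linarith [hv.1]
    have a2 : (1 - v) ≠ 0 := by linarith [hv.2]
    have a3 : (1 - v^2) ≠ 0 := by nlinarith [hv.1, hv.2]
    have e1 := ((hasDerivAt_id v).const_add 1).log a1
    have e2 := ((hasDerivAt_id v).const_sub 1).log a2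
    have := (((e1.add e2).const_mul 2).add (((hasDerivAt_id v).mul (e1.sub e2)).const_mul (3/2))).sub ((hasDerivAt_id v).pow 2)
    refine this.congr_deriv ?_
    simp only [id]
    have a4 : 1 - v^2 = (1-v)*(1+v) := by ring
    simp only [a4]
    simp
    field_simp
    ring
  have anti := strictAntiOn_of_deriv_neg (convex_Ico (0:ℝ) 1)
    (fun v hv => (key v hv).continuousAt.continuousWithinAt) (by
      intro v hv
      rw [interior_Ico] at hv
      rw [(key v ⟨hv.1.le, hv.2⟩).deriv]
      exact phi1_neg v hv.1 hv.2)
  have := anti ⟨le_rfl, one_pos⟩ ⟨h0.le, h1⟩ h0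
  simpa using this

/-- the difference -/
noncomputable def gg (x : ℝ) : ℝ :=
  (x + 3/2) * ((x+2) * log (x+2)) + (x+1/2) * (x * log x) - (2*(x+1)^2+1) * log (x+1) - 2

theorem gg_anti : StrictAntiOn gg (Ici 0) := by
  have key : ∀ v ∈ Ioi (0:ℝ), HasDerivAt gg
      ((2*(v+1)+3/2) * log (v+2) + (2*(v+1)-3/2) * log v - 4*(v+1) * log (v+1) - 1/(v+1)) v := by
    intro v hv
    have hv : 0 < v := hv
    have e1 := ((hasDerivAt_id v).add_const 2).log (by simp; positivity)
    have e2 := ((hasDerivAt_id v).add_const 1).log (by simp; positivity)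
    have e3 := (hasDerivAt_id v).log (by simp; positivity)
    have := (((((hasDerivAt_id v).add_const (3/2)).mul (((hasDerivAt_id v).add_const 2).mul e1)).add
      (((hasDerivAt_id v).add_const (1/2)).mul ((hasDerivAt_id v).mul e3))).sub
      (((((((hasDerivAt_id v).add_const 1).pow 2).const_mul 2).add_const 1)).mul e2)).sub_const 2
    refine this.congr_deriv ?_
    simp
    field_simp
    ring
  refine strictAntiOn_of_deriv_neg (convex_Ici (0:ℝ)) ?_ ?_
  · unfold gg
    have h1 : ContinuousOn (fun x : ℝ => x * log x) (Ici 0) := continuous_mul_log.continuousOn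
    have h2 : ContinuousOn (fun x : ℝ => log (x+2)) (Ici 0) :=
      ContinuousOn.log (by fun_prop) (fun x hx => by have : (0:ℝ) ≤ x := hx; positivity)
    have h3 : ContinuousOn (fun x : ℝ => log (x+1)) (Ici 0) :=
      ContinuousOn.log (by fun_prop) (fun x hx => by have : (0:ℝ) ≤ x := hx; positivity)
    fun_prop
  · intro v hv
    rw [interior_Ici] at hv
    rw [(key v hv).deriv]
    have hv : 0 < v := hv
    have h := phi_neg (1/(v+1)) (by positivity) (by rw [div_lt_one (by positivity)]; linarith)
    have l1 : log (1 + 1/(v+1)) = log (v+2) - log (v+1) := by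
      rw [← log_div (by positivity) (by positivity)]; congr 1; field_simp; ring
    have l2 : log (1 - 1/(v+1)) = log v - log (v+1) := by
      rw [← log_div (by positivity) (by positivity)]; congr 1; field_simp; ring
    rw [l1, l2] at h
    have : (v+1) * (2 * (log (v + 2) - log (v + 1) + (log v - log (v + 1))) +
        3 / 2 * (1 / (v + 1) * (log (v + 2) - log (v + 1) - (log v - log (v + 1)))) -
      (1 / (v + 1)) ^ 2) < 0 := mul_neg_of_pos_of_neg (by positivity) h
    refine lt_of_eq_of_lt ?_ this
    field_simp
    ring

noncomputable def ff (x : ℝ) : ℝ :=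
  log (Gamma (x+1)) - 1/2 * log (2*π) - (x+1/2) * ((x+1) * log (x+1) - x * log x) + 2*x + 1

theorem ff_step (x : ℝ) (hx : 0 ≤ x) : ff x = gg x + ff (x+1) := by
  unfold ff gg
  rw [Gamma_add_one (by positivity : x+1 ≠ 0), log_mul (by positivity) (Gamma_pos_of_pos (by positivity)).ne']
  rw [show x + 1 + 1 = x + 2 by ring]
  ring

theorem ff_sub (x y : ℝ) (hx : 0 ≤ x) (hxy : x < y) (n : ℕ) :
    gg x - gg y + (ff (x+(n+1:ℕ)) - ff (y+(n+1:ℕ))) ≤ ff x - ff y := by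
  induction n with
  | zero => 
    have := ff_step x hx
    have := ff_step y (hx.trans hxy.le)
    simp; linarith
  | succ n ih =>
    have h1 := ff_step (x+(n+1:ℕ)) (by positivity)
    have hy : 0 ≤ y := hx.trans hxy.le
    have h2 := ff_step (y+(n+1:ℕ)) (by positivity)
    have := gg_anti (a := x+(n+1:ℕ)) (b := y+(n+1:ℕ)) (by simp; positivity) (by simp; positivity) (by linarith)
    push_cast at *
    simp only [← add_assoc] at *
    linarith

theorem logGamma_lim (x : ℝ) (hx : 0 ≤ x) :
    Tendsto (fun n : ℕ => log (Gamma (x+n+1)) - x * log n - log (n.factorial)) atTop (𝓝 0) := by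
  rcases hx.eq_or_lt with rfl | hx
  · simp [Gamma_nat_eq_factorial]
  · have h := (BohrMollerup.tendsto_log_gamma hx).const_sub (log (Gamma x))
    rw [sub_self] at h
    refine h.congr fun n => ?_
    have := BohrMollerup.f_add_nat_eq (f := log ∘ Gamma) (x := x) (fun {y} hy => by
      simp only [Function.comp]
      rw [Gamma_add_one hy.ne', log_mul hy.ne' (Gamma_pos_of_pos hy).ne', add_comm]) hx (n+1)
    simp only [Function.comp] at this
    push_cast at this
    rw [add_assoc x, this, BohrMollerup.logGammaSeq]
    ring

theorem fact_lim :
    Tendsto (fun n : ℕ => log (n.factorial) - (n+1/2) * log n + n) atTop (𝓝 (1/2 * log (2*π))) := by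
  have h := (Stirling.tendsto_stirlingSeq_sqrt_pi.log (by positivity)).add_const (1/2 * log 2)
  have e : log √π + 1/2 * log 2 = 1/2 * log (2*π) := by
    rw [log_sqrt pi_pos.le, log_mul (by norm_num) pi_pos.ne']; ring
  rw [e] at h
  refine h.congr' ?_
  filter_upwards [eventually_gt_atTop 0] with n hn
  have hn : (0:ℝ) < n := by exact_mod_cast hn
  rw [Stirling.log_stirlingSeq_formula, log_mul (by norm_num) hn.ne', log_div hn.ne' (by positivity), log_exp]
  ring

theorem shift_lim (x : ℝ) (hx : 0 ≤ x) :
    Tendsto (fun n : ℕ => (x+n+1/2) * log (x+n) - (x + n + 1/2) * log n - x) atTop (𝓝 0) := by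
  have h := (tendsto_mul_log_one_add_div_atTop x).comp tendsto_natCast_atTop_atTop
  have h2 : Tendsto (fun n : ℕ => log (1 + x / n)) atTop (𝓝 0) := by
    have : Tendsto (fun n : ℕ => 1 + x / n) atTop (𝓝 (1 + 0)) := (tendsto_const_div_atTop_nhds_zero_nat x).const_add 1
    simpa using this.log (by norm_num)
  have := (h.add (h2.const_mul (x+1/2))).sub_const x
  simp only [mul_zero, add_zero, sub_self] at this
  refine this.congr' ?_
  filter_upwards [eventually_gt_atTop 0] with n hn
  have hn : (0:ℝ) < n := by exact_mod_cast hn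
  have : log (1 + x/n) = log (x+n) - log n := by
    rw [← log_div (by positivity) (by positivity)]; congr 1; field_simp; ring
  simp only [Function.comp, this]
  ring

theorem rem_lim : Tendsto (fun y : ℝ => (y+1) * (1 - (y+1/2) * (log (y+1) - log y))) atTop (𝓝 0) := by
  have h : Tendsto (fun y : ℝ => 8 * y⁻¹) atTop (𝓝 0) := by
    simpa using tendsto_inv_atTop_zero.const_mul (8:ℝ)
  refine squeeze_zero_norm' ?_ h
  filter_upwards [eventually_ge_atTop 2] with y hy
  have hy0 : 0 < y := by linarith
  have hw : y⁻¹ ≤ 1/2 := by rw [inv_le_comm₀ hy0 (by norm_num)]; linarith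
  have hw0 : 0 < y⁻¹ := by positivity
  have b := abs_log_sub_add_sum_range_le (x := -y⁻¹) (by rw [abs_neg, abs_of_pos hw0]; linarith) 2
  have l : log (1 - -y⁻¹) = log (y+1) - log y := by
    rw [← log_div (by positivity) (by positivity)]; congr 1; field_simp; ring
  rw [l, abs_neg, abs_of_pos hw0] at b
  simp only [Finset.sum_range_succ, Finset.sum_range_zero] at b
  norm_num only at b
  set w := y⁻¹ with hwd
  have hyw : y = w⁻¹ := by simp [hwd]
  set L := log (y+1) - log y
  have b2 : w^3/(1-w) ≤ 2*w^3 := by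
    rw [div_le_iff₀ (by linarith)]; nlinarith [pow_pos hw0 3]
  obtain ⟨q, hq⟩ : ∃ q, L = w - w^2/2 + q * w^2 := ⟨(L - w + w^2/2)/w^2, by field_simp; ring⟩
  have hqb : |q| ≤ 2 * w := by
    have h3 : |q * w^2| ≤ 2 * w^3 := by
      refine le_trans (le_of_eq ?_) (b.trans b2)
      rw [hq]; congr 1; push_cast; ring
    rw [abs_mul, abs_of_pos (by positivity : 0 < w^2)] at h3
    have : |q| * w^2 ≤ (2 * w) * w^2 := by linarith
    exact le_of_mul_le_mul_right this (by positivity)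
  have e : (y+1) * (1 - (y+1/2) * L) = (1+w) * (w/4 - (1+w/2)*q) := by
    rw [hq, hyw]; field_simp; ring
  rw [e, norm_eq_abs, abs_mul, abs_of_pos (by positivity : 0 < 1 + w)]
  have h5 : |w/4 - (1+w/2)*q| ≤ w/4 + (1+w/2)*|q| := by
    refine (abs_sub _ _).trans (le_of_eq ?_)
    rw [abs_mul, abs_of_pos (by positivity : 0 < w/4), abs_of_pos (by positivity : 0 < 1 + w/2)]
  have h6 : (1+w/2)*|q| ≤ (5/4) * (2*w) :=
    mul_le_mul (by linarith) hqb (abs_nonneg _) (by norm_num)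
  have h7 : (1+w) * |w/4 - (1+w/2)*q| ≤ (3/2) * (w/4 + 5/4*(2*w)) :=
    mul_le_mul (by linarith) (by linarith) (abs_nonneg _) (by norm_num)
  linarith

theorem ff_lim (x : ℝ) (hx : 0 ≤ x) : Tendsto (fun n : ℕ => ff (x + (n+1:ℕ))) atTop (𝓝 0) := by
  suffices h : Tendsto (fun n : ℕ => ff (x + n)) atTop (𝓝 0) from
    h.comp (tendsto_add_atTop_nat 1)
  have h1 := logGamma_lim x hx
  have h2 := fact_lim.sub_const (1/2 * log (2*π))
  have h3 := shift_lim x hx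
  have h4 := rem_lim.comp (tendsto_atTop_add_const_left _ x tendsto_natCast_atTop_atTop)
  have := ((h1.add h2).sub h3).add h4
  simp only [sub_self, add_zero] at this
  refine this.congr fun n => ?_
  simp only [Function.comp, ff]
  ring

theorem ff_anti (x y : ℝ) (hx : 0 ≤ x) (hxy : x < y) : ff y < ff x := by
  have h := (ff_lim x hx).sub (ff_lim y (hx.trans hxy.le))
  have := le_of_tendsto' (h.const_add (gg x - gg y)) (ff_sub x y hx hxy)
  have := gg_anti (a := x) (b := y) hx (hx.trans hxy.le) hxy
  linarith

theorem ff_pos (x : ℝ) (hx : 0 ≤ x) : 0 < ff x := by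
  have h1 := ff_anti x (x+1) hx (by linarith)
  have : 0 ≤ ff (x+1) := by
    refine le_of_tendsto' (ff_lim (x+1) (by positivity)) fun n => ?_
    refine (ff_anti _ _ (by positivity) ?_).le
    push_cast
    linarith [(Nat.cast_nonneg n : (0:ℝ) ≤ n)]
  linarith

theorem gamma_double_ineq (x : ℝ) (hx : 0 < x) :
    Real.sqrt (2 * π) * Real.exp (-2 * x - 1)
        * (x + 1) ^ ((x + 1) * (x + 1 / 2)) / x ^ (x * (x + 1 / 2))
      < Real.Gamma (x + 1) ∧
    Real.Gamma (x + 1)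
      < Real.exp (-2 * x) * (x + 1) ^ ((x + 1) * (x + 1 / 2)) / x ^ (x * (x + 1 / 2)) := by
  have hG : 0 < Gamma (x+1) := Gamma_pos_of_pos (by positivity)
  have hx1 : 0 < x + 1 := by positivity
  have p1 : 0 < (x + 1) ^ ((x + 1) * (x + 1 / 2)) := by positivity
  have p2 : 0 < x ^ (x * (x + 1 / 2)) := by positivity
  have h0 := ff_pos x hx.le
  have h1 := ff_anti 0 x le_rfl hx
  simp only [ff] at h0 h1
  norm_num at h1
  constructor
  · rw [← log_lt_log_iff (by positivity) hG, log_div (by positivity) p2.ne',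
      log_mul (by positivity) p1.ne', log_mul (by positivity) (by positivity), log_exp, log_rpow hx1, log_rpow hx,
      log_sqrt (by positivity)]
    linarith
  · rw [← log_lt_log_iff hG (by positivity), log_div (by positivity) p2.ne',
      log_mul (by positivity) p1.ne', log_exp, log_rpow hx1, log_rpow hx]
    linarith
end

section
/- For every x > 0, √(2π)·((x+1/2)/e · (x²+x+23/80)/(x²+x+79/240))^{x+1/2} > Γ(x+1) > √(158e/69)·((x+1/2)/e · (x²+x+23/80)/(x²+x+79/240))^{x+1/2}, and the constants √(158e/69) and √(2π) are best possible. -/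
open Real

namespace GammaAux
open Filter Topology

noncomputable def F (y : ℝ) : ℝ := y * (log y + log (y ^ 2 + 3/80) - log (y ^ 2 + 19/240)) - y

noncomputable def F1 (y : ℝ) : ℝ :=
  log y + (log (y ^ 2 + 3/80) - log (y ^ 2 + 19/240))
    + (2 * (19/240) / (y ^ 2 + 19/240) - 2 * (3/80) / (y ^ 2 + 3/80))

noncomputable def N (y : ℝ) : ℝ :=
  (y^2+3/80)^2*(y^2+19/240)^2 + 2*y^2*(y^2+3/80)*(y^2+19/240)^2
   - 2*y^2*(y^2+3/80)^2*(y^2+19/240) + 4*(3/80)*y^2*(y^2+19/240)^2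
   - 4*(19/240)*y^2*(y^2+3/80)^2

noncomputable def D (y : ℝ) : ℝ := y * ((y^2+3/80)^2*(y^2+19/240)^2)

noncomputable def g (v : ℝ) : ℝ := log (Gamma (v + 1/2)) - F v
noncomputable def d (v : ℝ) : ℝ := log (v + 1/2) - F (v + 1) + F v
noncomputable def d1 (v : ℝ) : ℝ := 1 / (v + 1/2) - F1 (v + 1) + F1 v
noncomputable def E (y : ℝ) : ℝ := y * (log (y ^ 2 + 3/80) - log (y ^ 2 + 19/240))

lemma hasDerivAt_F {y : ℝ} (hy : 0 < y) : HasDerivAt F (F1 y) y := by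
  have h1 : HasDerivAt (fun y : ℝ => y^2 + 3/80) (2*y) y := by
    simpa using ((hasDerivAt_id y).pow 2).add_const (3/80 : ℝ)
  have h2 : HasDerivAt (fun y : ℝ => y^2 + 19/240) (2*y) y := by
    simpa using ((hasDerivAt_id y).pow 2).add_const (19/240 : ℝ)
  have h := ((hasDerivAt_id y).mul (((hasDerivAt_log hy.ne').add
    (h1.log (by positivity))).sub (h2.log (by positivity)))).sub (hasDerivAt_id y)
  refine h.congr_deriv ?_
  simp only [F1, id, Pi.add_apply, Pi.sub_apply]
  have : y^2 + 3/80 ≠ 0 := by positivity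
  have : y^2 + 19/240 ≠ 0 := by positivity
  field_simp
  ring

lemma hasDerivAt_F1 {y : ℝ} (hy : 0 < y) : HasDerivAt F1 (N y / D y) y := by
  have h1 : HasDerivAt (fun y : ℝ => y^2 + 3/80) (2*y) y := by
    simpa using ((hasDerivAt_id y).pow 2).add_const (3/80 : ℝ)
  have h2 : HasDerivAt (fun y : ℝ => y^2 + 19/240) (2*y) y := by
    simpa using ((hasDerivAt_id y).pow 2).add_const (19/240 : ℝ)
  have e1 : y^2 + 3/80 ≠ 0 := by positivity
  have e2 : y^2 + 19/240 ≠ 0 := by positivity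
  have h := ((hasDerivAt_log hy.ne').add ((h1.log e1).sub (h2.log e2))).add
    (((hasDerivAt_const y (2 * (19/240) : ℝ)).div h2 e2).sub
      ((hasDerivAt_const y (2 * (3/80) : ℝ)).div h1 e1))
  refine h.congr_deriv ?_
  simp only [N, D]
  field_simp
  ring

lemma hasDerivAt_d {v : ℝ} (hv : 0 < v) : HasDerivAt d (d1 v) v := by
  have h := ((((hasDerivAt_id v).add_const (1/2:ℝ)).log (by simp only [id]; positivity)).sub
    ((hasDerivAt_F (y := v + 1) (by positivity)).comp_add_const v 1)).add (hasDerivAt_F hv)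
  exact h

lemma hasDerivAt_d1 {v : ℝ} (hv : 0 < v) :
    HasDerivAt d1 (-1 / (v + 1/2)^2 - N (v+1) / D (v+1) + N v / D v) v := by
  have h := (((hasDerivAt_const v (1:ℝ)).div ((hasDerivAt_id v).add_const (1/2:ℝ))
    (by simp only [id]; positivity)).sub
    ((hasDerivAt_F1 (y := v + 1) (by positivity)).comp_add_const v 1)).add (hasDerivAt_F1 hv)
  refine h.congr_deriv ?_
  simp

lemma d2_pos {v : ℝ} (hv : 0 < v) :
    0 < -1 / (v + 1/2)^2 - N (v+1) / D (v+1) + N v / D v := by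
  have hD : 0 < D v := by unfold D; positivity
  have hD1 : 0 < D (v+1) := by unfold D; positivity
  have e : -1 / (v + 1/2)^2 - N (v+1) / D (v+1) + N v / D v =
    (-(D (v+1) * D v) - (v+1/2)^2 * N (v+1) * D v + (v+1/2)^2 * N v * D (v+1)) /
      ((v+1/2)^2 * D (v+1) * D v) := by
    field_simp
  rw [e]
  apply div_pos _ (by positivity)
  unfold N D
  ring_nf
  positivity

lemma tendsto_E : Tendsto E atTop (𝓝 0) := by
  have hl : Tendsto (fun y : ℝ => -(y⁻¹)) atTop (𝓝 0) := by
    simpa using (tendsto_inv_atTop_zero (𝕜 := ℝ)).neg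
  refine tendsto_of_tendsto_of_tendsto_of_le_of_le' hl tendsto_const_nhds ?_ ?_
  · filter_upwards [eventually_gt_atTop 0] with y hy
    have h1 : log ((y^2+19/240)/(y^2+3/80)) ≤ (y^2+19/240)/(y^2+3/80) - 1 :=
      log_le_sub_one_of_pos (by positivity)
    rw [log_div (by positivity) (by positivity)] at h1
    have h2 : (y^2+19/240)/(y^2+3/80) - 1 ≤ y⁻¹ * y⁻¹ := by
      rw [← mul_inv, ← one_div, div_sub_one (by positivity),
        div_le_div_iff₀ (by positivity) (by positivity)]
      nlinarith [sq_nonneg y]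
    have h3 : y * (log (y^2+19/240) - log (y^2+3/80)) ≤ y * (y⁻¹ * y⁻¹) :=
      mul_le_mul_of_nonneg_left (h1.trans h2) hy.le
    have h4 : y * (y⁻¹ * y⁻¹) = y⁻¹ := by field_simp
    unfold E
    linarith
  · filter_upwards [eventually_gt_atTop 0] with y hy
    have : log (y^2+3/80) ≤ log (y^2+19/240) := log_le_log (by positivity) (by linarith)
    unfold E
    nlinarith

lemma tendsto_aux (c a : ℝ) : Tendsto (fun y : ℝ => c / (y^2 + a)) atTop (𝓝 0) :=
  tendsto_const_nhds.div_atTop (tendsto_atTop_add_const_right _ _ (tendsto_pow_atTop two_ne_zero))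

lemma tendsto_F1_sub : Tendsto (fun y => F1 y - log y) atTop (𝓝 0) := by
  have h := ((tendsto_E.mul tendsto_inv_atTop_zero)).add
    ((tendsto_aux (2 * (19/240)) (19/240)).sub (tendsto_aux (2 * (3/80)) (3/80)))
  simp only [mul_zero, sub_zero, add_zero] at h
  refine h.congr' ?_
  filter_upwards [eventually_gt_atTop 0] with y hy
  unfold E F1
  field_simp
  ring

lemma tendsto_d1 : Tendsto d1 atTop (𝓝 0) := by
  have ha : Tendsto (fun y : ℝ => y + 1) atTop atTop := tendsto_atTop_add_const_right _ _ tendsto_id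
  have hb : Tendsto (fun y : ℝ => y + 1/2) atTop atTop :=
    tendsto_atTop_add_const_right _ _ tendsto_id
  have hlog : Tendsto (fun y : ℝ => log (1 + y⁻¹)) atTop (𝓝 0) := by
    have : Tendsto (fun y : ℝ => 1 + y⁻¹) atTop (𝓝 1) := by
      simpa using (tendsto_inv_atTop_zero (𝕜 := ℝ)).const_add 1
    simpa using this.log one_ne_zero
  have h := ((hb.inv_tendsto_atTop.sub (tendsto_F1_sub.comp ha)).add tendsto_F1_sub).sub hlog
  simp only [sub_zero, add_zero] at h
  refine h.congr' ?_
  filter_upwards [eventually_gt_atTop 0] with y hy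
  have : log (1 + y⁻¹) = log (y + 1) - log y := by
    rw [← log_div (by positivity) hy.ne']
    congr 1
    field_simp
  simp only [this, d1, Function.comp, Pi.inv_apply]
  ring

lemma strictMonoOn_d1 : StrictMonoOn d1 (Set.Ioi 0) := by
  apply strictMonoOn_of_deriv_pos (convex_Ioi 0)
  · intro v hv
    exact (hasDerivAt_d1 hv).continuousAt.continuousWithinAt
  · intro v hv
    rw [interior_Ioi] at hv
    rw [(hasDerivAt_d1 hv).deriv]
    exact d2_pos hv

lemma d1_neg {v : ℝ} (hv : 0 < v) : d1 v < 0 := by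
  have h1 : d1 v < d1 (v+1) :=
    strictMonoOn_d1 hv (show (0:ℝ) < v + 1 by positivity) (by linarith)
  refine h1.trans_le (ge_of_tendsto tendsto_d1 ?_)
  filter_upwards [eventually_ge_atTop (v+1)] with w hw
  exact strictMonoOn_d1.monotoneOn (show (0:ℝ) < v + 1 by positivity)
    (show (0:ℝ) < w by linarith) hw

lemma strictAntiOn_d : StrictAntiOn d (Set.Ioi 0) := by
  apply strictAntiOn_of_deriv_neg (convex_Ioi 0)
  · intro v hv
    exact (hasDerivAt_d hv).continuousAt.continuousWithinAt
  · intro v hv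
    rw [interior_Ioi] at hv
    rw [(hasDerivAt_d hv).deriv]
    exact d1_neg hv

lemma feq {y : ℝ} (hy : 0 < y) : (log ∘ Gamma) (y + 1) = (log ∘ Gamma) y + log y := by
  simp only [Function.comp]
  rw [Gamma_add_one hy.ne', log_mul hy.ne' (Gamma_pos_of_pos hy).ne', add_comm]

lemma g_succ {v : ℝ} (hv : 0 < v) : g (v + 1) - g v = d v := by
  have h := feq (y := v + 1/2) (by positivity)
  simp only [Function.comp] at h
  unfold g d
  rw [show v + 1 + 1/2 = v + 1/2 + 1 by ring, h]
  ring

lemma tendsto_g' {v : ℝ} (hv : 0 < v) :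
    Tendsto (fun n : ℕ => g (v + 1 + n)) atTop (𝓝 (log (√ (2 * π)))) := by
  have hz : 0 < v + 1/2 := by positivity
  have t1 := (tendsto_const_nhds (x := log (Gamma (v+1/2))) (f := (atTop : Filter ℕ))).sub
    (BohrMollerup.tendsto_log_gamma hz)
  have t2 := Stirling.tendsto_stirlingSeq_sqrt_pi.log (by positivity)
  have hn : Tendsto (fun n : ℕ => (n:ℝ)) atTop atTop := tendsto_natCast_atTop_atTop
  have t3 := (tendsto_mul_log_one_add_div_atTop (v+1)).comp hn
  have t4 : Tendsto (fun n : ℕ => (v+1) * log (1 + (v+1) / (n:ℝ))) atTop (𝓝 0) := by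
    have : Tendsto (fun n : ℕ => 1 + (v+1) / (n:ℝ)) atTop (𝓝 1) := by
      simpa using (tendsto_const_nhds.div_atTop hn (a := v+1)).const_add 1
    simpa using (this.log one_ne_zero).const_mul (v+1)
  have t5 := tendsto_E.comp (tendsto_atTop_add_const_left _ (v+1) hn)
  have h := ((((t1.add t2).sub t3).sub t4).sub t5).add_const (log 2 / 2 + (v + 1))
  have e : log (Gamma (v+1/2)) - log (Gamma (v+1/2)) + log (√π) - (v+1) - 0 - 0 +
      (log 2 / 2 + (v+1)) = log √(2*π) := by
    rw [log_sqrt (by positivity), log_sqrt (by positivity), log_mul (by norm_num) (by positivity)]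
    ring
  rw [e] at h
  refine h.congr' ?_
  filter_upwards [eventually_gt_atTop 0] with n hn0
  have hnp : (0:ℝ) < n := by exact_mod_cast hn0
  have k1 := BohrMollerup.f_add_nat_eq (f := log ∘ Gamma) (fun {y} hy => feq hy) hz (n+1)
  have k2 := Stirling.log_stirlingSeq_formula n
  have k3 : log (1 + (v+1)/(n:ℝ)) = log (v + 1 + n) - log n := by
    rw [← log_div (by positivity) hnp.ne']
    congr 1
    field_simp
    ring
  simp only [Function.comp] at k1
  push_cast at k1
  rw [log_mul (by norm_num) hnp.ne', log_div hnp.ne' (exp_pos 1).ne', log_exp] at k2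
  simp only [Function.comp, BohrMollerup.logGammaSeq, k3, g, E, F]
  rw [show v + 1 + n + 1/2 = v + 1/2 + (n+1) by ring, k1, k2]
  ring

lemma tendsto_g {v : ℝ} (hv : 0 < v) :
    Tendsto (fun n : ℕ => g (v + n)) atTop (𝓝 (log (√ (2 * π)))) := by
  rw [← tendsto_add_atTop_iff_nat 1]
  refine (tendsto_g' hv).congr fun n => ?_
  push_cast
  congr 1
  ring

lemma strictMonoOn_g : StrictMonoOn g (Set.Ioi 0) := by
  intro v hv w hw hvw
  simp only [Set.mem_Ioi] at hv hw
  have hs : StrictAnti (fun n : ℕ => g (w + n) - g (v + n)) := by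
    apply strictAnti_nat_of_succ_lt
    intro n
    have a1 := g_succ (v := v + n) (by positivity)
    have a2 := g_succ (v := w + n) (by positivity)
    have a3 : d (w + n) < d (v + n) := strictAntiOn_d (show 0 < v + n by positivity)
      (show 0 < w + n by positivity) (by linarith)
    push_cast
    rw [← add_assoc, ← add_assoc]
    linarith
  have ht : Tendsto (fun n : ℕ => g (w + n) - g (v + n)) atTop (𝓝 0) := by
    simpa using (tendsto_g hw).sub (tendsto_g hv)
  have h1 := hs.antitone.le_of_tendsto ht 1
  have h2 := hs (show 0 < 1 by norm_num)
  simp only [Nat.cast_zero, add_zero] at h1 h2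
  linarith

lemma g_lt {v : ℝ} (hv : 0 < v) : g v < log (√ (2 * π)) := by
  have hs : StrictMono (fun n : ℕ => g (v + n)) := by
    intro m n hmn
    have : (m:ℝ) < n := by exact_mod_cast hmn
    exact strictMonoOn_g (show 0 < v + m by positivity) (show 0 < v + n by positivity)
      (by linarith)
  have h1 := hs.monotone.ge_of_tendsto (tendsto_g hv) 1
  have h2 := hs (show 0 < 1 by norm_num)
  simp only [Nat.cast_zero, add_zero] at h1 h2
  linarith

lemma H_eq {x : ℝ} (hx : 0 ≤ x) :
    ((x + 1 / 2) / Real.exp 1 * ((x ^ 2 + x + 23 / 80) / (x ^ 2 + x + 79 / 240))) ^ (x + 1 / 2)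
      = exp (F (x + 1/2)) := by
  rw [rpow_def_of_pos (by positivity), log_mul (by positivity) (by positivity),
    log_div (by positivity) (by positivity), log_div (by positivity) (by positivity), log_exp]
  unfold F
  rw [show (x + 1/2)^2 + 3/80 = x^2 + x + 23/80 by ring,
    show (x + 1/2)^2 + 19/240 = x^2 + x + 79/240 by ring]
  congr 1
  ring

lemma Gamma_eq {x : ℝ} (hx : 0 ≤ x) :
    Gamma (x + 1) = exp (g (x + 1/2)) * exp (F (x + 1/2)) := by
  rw [← exp_add, g, sub_add_cancel, show x + 1/2 + 1/2 = x + 1 by ring,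
    exp_log (Gamma_pos_of_pos (by positivity))]

lemma const_eq : √(158 * Real.exp 1 / 69) = exp (g (1/2)) := by
  have h1 := H_eq (le_refl (0:ℝ))
  have h2 := Gamma_eq (le_refl (0:ℝ))
  simp only [zero_add, Gamma_one] at h1 h2
  rw [← h1, ← sqrt_eq_rpow] at h2
  rw [eq_div_of_mul_eq (by positivity) h2.symm, one_div, ← sqrt_inv]
  congr 1
  field_simp
  norm_num

end GammaAux

open GammaAux Filter Topology in
theorem gamma_double_ineq_best :
    (∀ x : ℝ, 0 < x →
      Real.sqrt (158 * Real.exp 1 / 69)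
          * ((x + 1 / 2) / Real.exp 1 * ((x ^ 2 + x + 23 / 80) / (x ^ 2 + x + 79 / 240)))
            ^ (x + 1 / 2)
        < Real.Gamma (x + 1) ∧
      Real.Gamma (x + 1)
        < Real.sqrt (2 * π)
          * ((x + 1 / 2) / Real.exp 1 * ((x ^ 2 + x + 23 / 80) / (x ^ 2 + x + 79 / 240)))
            ^ (x + 1 / 2)) ∧
    (∀ c : ℝ, (∀ x : ℝ, 0 < x →
        c * ((x + 1 / 2) / Real.exp 1 * ((x ^ 2 + x + 23 / 80) / (x ^ 2 + x + 79 / 240)))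
            ^ (x + 1 / 2) ≤ Real.Gamma (x + 1)) →
      c ≤ Real.sqrt (158 * Real.exp 1 / 69)) ∧
    (∀ c : ℝ, (∀ x : ℝ, 0 < x →
        Real.Gamma (x + 1)
          ≤ c * ((x + 1 / 2) / Real.exp 1 * ((x ^ 2 + x + 23 / 80) / (x ^ 2 + x + 79 / 240)))
            ^ (x + 1 / 2)) →
      Real.sqrt (2 * π) ≤ c) := by
  have hL : √(2 * π) = exp (log √(2 * π)) := (exp_log (by positivity)).symm
  refine ⟨fun x hx => ?_, fun c hc => ?_, fun c hc => ?_⟩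
  · rw [H_eq hx.le, Gamma_eq hx.le, const_eq]
    constructor
    · gcongr
      exact strictMonoOn_g (show (0:ℝ) < 1/2 by norm_num) (show 0 < x + 1/2 by positivity)
        (by linarith)
    · rw [hL]
      gcongr
      exact g_lt (by positivity)
  · rw [const_eq]
    have hcont : ContinuousAt (fun x => exp (g (x + 1/2))) 0 := by
      have c1 : ContinuousAt g (0 + 1/2) := by
        unfold g
        refine ContinuousAt.sub (ContinuousAt.log ?_ ?_) (hasDerivAt_F (by norm_num)).continuousAt
        · have : ContinuousAt Gamma (0 + 1/2 + 1/2) := by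
            refine (differentiableAt_Gamma fun m => ?_).continuousAt
            have : (0:ℝ) ≤ m := m.cast_nonneg
            intro h
            linarith
          exact ContinuousAt.comp (f := fun v : ℝ => v + 1/2) this (by fun_prop)
        · exact (Gamma_pos_of_pos (by norm_num)).ne'
      have c2 : ContinuousAt (fun x => g (x + 1/2)) 0 :=
        ContinuousAt.comp (f := fun v : ℝ => v + 1/2) c1 (by fun_prop)
      exact c2.rexp
    have ht : Tendsto (fun x => exp (g (x + 1/2))) (𝓝[>] 0) (𝓝 (exp (g (1/2)))) := by
      have := hcont.tendsto.mono_left (nhdsWithin_le_nhds (s := Set.Ioi 0))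
      simpa using this
    refine ge_of_tendsto ht ?_
    filter_upwards [self_mem_nhdsWithin] with x hx
    have hx' : 0 < x := hx
    have := hc x hx'
    rw [H_eq hx'.le, Gamma_eq hx'.le] at this
    exact le_of_mul_le_mul_right this (exp_pos _)
  · have ht := ((continuous_exp.tendsto _).comp (tendsto_g (v := 1 + 1/2) (by norm_num)))
    rw [← hL] at ht
    refine le_of_tendsto' ht fun n => ?_
    have hx' : (0:ℝ) < 1 + n := by positivity
    have := hc (1 + n) hx'
    rw [H_eq hx'.le, Gamma_eq hx'.le] at this
    have h2 := le_of_mul_le_mul_right this (exp_pos _)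
    simp only [Function.comp]
    rwa [show (1:ℝ) + 1/2 + n = 1 + n + 1/2 by ring]
end
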